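/- Let V be a real Hilbert space, K a compact subset of V, and let (u^k)_{k≥0} be a weak greedy sequence in K with parameter γ ∈ (0,1]. If for some constants C0 > 0 and s > 0 the Kolmogorov widths satisfy d_n(K) ≤ C0·(max{1,n})^{-s} for all n ≥ 0, then the greedy errors satisfy σ_n(K) ≤ 2^{4s+1}·C0·γ^{-2}·(max{1,n})^{-s} for all n ≥ 0. -/

import Mathlib

/-- The Kolmogorov `n`-width of a set `K` in a real inner product space:
the infimum over all subspaces `E` of dimension at most `n` of the worst-case
distance `‖u - P_E u‖ = infDist u E` over `u ∈ K`. -/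
noncomputable def kolWidth {V : Type*} [NormedAddCommGroup V] [InnerProductSpace ℝ V]
    (K : Set V) (n : ℕ) : ℝ :=
  ⨅ E : {E : Submodule ℝ V // Module.rank ℝ E ≤ (n : Cardinal)},
    ⨆ u ∈ K, Metric.infDist u (E.1 : Set V)

/-- The greedy error `σ_n(K) = sup_{x ∈ K} ‖x - P_{V_n} x‖` where
`V_n = span{u^0, …, u^{n-1}}`. -/
noncomputable def greedyErr {V : Type*} [NormedAddCommGroup V] [InnerProductSpace ℝ V]
    (u : ℕ → V) (K : Set V) (n : ℕ) : ℝ :=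
  ⨆ x ∈ K, Metric.infDist x (Submodule.span ℝ (u '' Set.Iio n) : Set V)

/-- `u` is a weak greedy sequence for `K` with parameter `γ`:
`‖u^n - P_{V_n} u^n‖ ≥ γ · σ_n(K)` for all `n`. -/
def IsWeakGreedy {V : Type*} [NormedAddCommGroup V] [InnerProductSpace ℝ V]
    (u : ℕ → V) (K : Set V) (γ : ℝ) : Prop :=
  ∀ n : ℕ, γ * greedyErr u K n ≤
    Metric.infDist (u n) (Submodule.span ℝ (u '' Set.Iio n) : Set V)

/-!
Let `g` be the Gram–Schmidt orthogonalisation of `u`, so that `‖g n‖ = dist (u n) V_n`. In the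
coordinates `⟪g_{N+i} / ‖g_{N+i}‖, ·⟫`, `i < n`, the vectors `u_{N+j}`, `j < n`, form a triangular
matrix with determinant `∏ ‖g_{N+i}‖`. These coordinates contract distances and kill `V_N`, so the
columns have norm at most `σ_N`, and they are `d_m`-close to the image `W` of a nearly optimal
`m`-dimensional space. Scaling by `σ_N⁻¹` along `W` and by `d_m⁻¹` along `Wᗮ` before applying
Hadamard's inequality bounds the determinant by `√2 ^ n * σ_N ^ m * d_m ^ (n - m)`. For a weak
greedy sequence and `n = 2 * m` this reads `(γ * σ_{N+2m}) ^ 2 ≤ 2 * σ_N * d_m`, and taking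
`N = 2 * m` with `m` running through the powers of two turns it into an induction for `σ`.
-/

open Finset InnerProductSpace Metric Module Submodule
open scoped Topology

section Distance

section Submodule

variable {R V W : Type*} [Ring R] [SeminormedAddCommGroup V] [Module R V]
  [SeminormedAddCommGroup W] [Module R W]

theorem infDist_submodule_le_norm (E : Submodule R V) (x : V) : infDist x (E : Set V) ≤ ‖x‖ := by
  simpa only [dist_zero_right] using infDist_le_dist_of_mem (x := x) E.zero_mem

theorem infDist_submodule_anti {E F : Submodule R V} (h : E ≤ F) (x : V) :
    infDist x (F : Set V) ≤ infDist x (E : Set V) :=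
  infDist_le_infDist_of_subset h E.nonempty

theorem infDist_map_le {L : V →ₗ[R] W} (hL : ∀ x, ‖L x‖ ≤ ‖x‖) (E : Submodule R V) (x : V) :
    infDist (L x) (E.map L : Set W) ≤ infDist x (E : Set V) := by
  refine (le_infDist E.nonempty).2 fun y hy ↦ ?_
  calc infDist (L x) (E.map L : Set W) ≤ dist (L x) (L y) :=
        infDist_le_dist_of_mem (mem_map_of_mem hy)
    _ ≤ dist x y := by simpa only [dist_eq_norm, map_sub] using hL (x - y)

end Submodule

variable {𝕜 V : Type*} [RCLike 𝕜] [NormedAddCommGroup V] [InnerProductSpace 𝕜 V]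

theorem infDist_submodule_eq_norm_sub (E : Submodule 𝕜 V) {x p : V} (hp : p ∈ E)
    (horth : ∀ y ∈ E, inner 𝕜 (x - p) y = 0) : infDist x (E : Set V) = ‖x - p‖ := by
  rw [(E.norm_eq_iInf_iff_inner_eq_zero hp).2 horth, infDist_eq_iInf]
  simp only [dist_eq_norm, SetLike.coe_sort_coe]

theorem infDist_eq_norm_starProjection_orthogonal (E : Submodule 𝕜 V) [E.HasOrthogonalProjection]
    (x : V) : infDist x (E : Set V) = ‖Eᗮ.starProjection x‖ := by
  rw [starProjection_orthogonal_val]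
  exact infDist_submodule_eq_norm_sub E (starProjection_apply_mem _ _)
    fun y hy ↦ starProjection_inner_eq_zero x y hy

end Distance

section OrthogonalScaling

variable {𝕜 F : Type*} [RCLike 𝕜] [NormedAddCommGroup F] [InnerProductSpace 𝕜 F]

theorem det_smul_starProjection_add_smul_starProjection [FiniteDimensional 𝕜 F] (W : Submodule 𝕜 F)
    (s t : 𝕜) :
    LinearMap.det (s • W.starProjection + t • Wᗮ.starProjection : F →ₗ[𝕜] F) =
      s ^ finrank 𝕜 W * t ^ finrank 𝕜 Wᗮ := by
  let e := W.prodEquivOfIsCompl Wᗮ W.isCompl_orthogonal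
  have hconj : (s • W.starProjection + t • Wᗮ.starProjection : F →ₗ[𝕜] F) =
      e.toLinearMap ∘ₗ (LinearMap.prodMap (s • LinearMap.id) (t • LinearMap.id)) ∘ₗ
        e.symm.toLinearMap := by
    ext x
    obtain ⟨⟨p, q⟩, rfl⟩ := e.surjective x
    simp [e, starProjection_eq_self_iff.2 p.2, (starProjection_apply_eq_zero_iff W).2 q.2]
  rw [hconj, LinearMap.det_conj, LinearMap.det_prodMap, LinearMap.det_smul, LinearMap.det_smul]
  simp only [LinearMap.det_id, mul_one]

theorem norm_smul_starProjection_add_smul_starProjection_sq (W : Submodule 𝕜 F)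
    [W.HasOrthogonalProjection] (s t : 𝕜) (x : F) :
    ‖s • W.starProjection x + t • Wᗮ.starProjection x‖ ^ 2 =
      (‖s‖ * ‖W.starProjection x‖) ^ 2 + (‖t‖ * ‖Wᗮ.starProjection x‖) ^ 2 := by
  have horth : inner 𝕜 (s • W.starProjection x) (t • Wᗮ.starProjection x) = 0 :=
    inner_right_of_mem_orthogonal (W.smul_mem s (starProjection_apply_mem _ _))
      (Wᗮ.smul_mem t (starProjection_apply_mem _ _))
  rw [@norm_add_sq 𝕜, horth, map_zero, mul_zero, add_zero, norm_smul, norm_smul]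

end OrthogonalScaling

section Determinant

variable {ι F : Type*} [Fintype ι] [DecidableEq ι] [NormedAddCommGroup F] [InnerProductSpace ℝ F]

theorem abs_det_orthonormalBasis_le_prod_norm (b : OrthonormalBasis ι ℝ F) (v : ι → F) :
    |b.toBasis.det v| ≤ ∏ i, ‖v i‖ := by
  let e := Fintype.equivFin ι
  have : Fact (finrank ℝ F = Fintype.card ι) := ⟨finrank_eq_card_basis b.toBasis⟩
  have hdet := (b.reindex e).toBasis.orientation.volumeForm_robust (b.reindex e) rfl
  have hle := (b.reindex e).toBasis.orientation.abs_volumeForm_apply_le (v ∘ e.symm)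
  rw [hdet, OrthonormalBasis.reindex_toBasis, Basis.det_reindex] at hle
  simpa [Function.comp_assoc, e.symm.prod_comp fun i ↦ ‖v i‖] using hle

theorem norm_inv_smul_starProjection_add_le_sqrt_two (W : Submodule ℝ F)
    [W.HasOrthogonalProjection] {σ δ : ℝ} (hσ : 0 < σ) (hδ : 0 < δ) {x : F} (hx : ‖x‖ ≤ σ)
    (hxW : infDist x (W : Set F) ≤ δ) :
    ‖σ⁻¹ • W.starProjection x + δ⁻¹ • Wᗮ.starProjection x‖ ≤ √2 := by
  have hW : σ⁻¹ * ‖W.starProjection x‖ ≤ 1 :=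
    inv_mul_le_one_of_le₀ ((W.norm_starProjection_apply_le x).trans hx) hσ.le
  have hWo : δ⁻¹ * ‖Wᗮ.starProjection x‖ ≤ 1 :=
    inv_mul_le_one_of_le₀ (infDist_eq_norm_starProjection_orthogonal W x ▸ hxW) hδ.le
  apply Real.le_sqrt_of_sq_le
  rw [norm_smul_starProjection_add_smul_starProjection_sq, Real.norm_of_nonneg (by positivity),
    Real.norm_of_nonneg (by positivity)]
  linarith [pow_le_one₀ (n := 2) (by positivity) hW, pow_le_one₀ (n := 2) (by positivity) hWo]

theorem abs_det_le_of_norm_le_of_infDist_le (b : OrthonormalBasis ι ℝ F) (W : Submodule ℝ F)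
    {σ δ : ℝ} (hσ : 0 < σ) (hδ : 0 < δ) {w : ι → F} (hw : ∀ i, ‖w i‖ ≤ σ)
    (hwW : ∀ i, infDist (w i) (W : Set F) ≤ δ) :
    |b.toBasis.det w| ≤ √2 ^ Fintype.card ι * (σ ^ finrank ℝ W * δ ^ finrank ℝ Wᗮ) := by
  have : FiniteDimensional ℝ F := b.toBasis.finiteDimensional_of_finite
  let T : F →ₗ[ℝ] F := σ⁻¹ • W.starProjection + δ⁻¹ • Wᗮ.starProjection
  have hT : |b.toBasis.det (T ∘ w)| ≤ √2 ^ Fintype.card ι := by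
    refine (abs_det_orthonormalBasis_le_prod_norm b _).trans ?_
    simpa using prod_le_prod (s := univ) (fun i _ ↦ norm_nonneg ((T ∘ w) i)) fun i _ ↦
      norm_inv_smul_starProjection_add_le_sqrt_two W hσ hδ (hw i) (hwW i)
  rw [Basis.det_comp, det_smul_starProjection_add_smul_starProjection, abs_mul, inv_pow, inv_pow,
    ← mul_inv, abs_of_pos (by positivity), inv_mul_le_iff₀ (by positivity)] at hT
  rwa [mul_comm]

theorem abs_det_le_of_finrank_le (b : OrthonormalBasis ι ℝ F) (W : Submodule ℝ F) {m : ℕ}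
    (hW : finrank ℝ W ≤ m) (hm : m ≤ Fintype.card ι) {σ δ : ℝ} (hσ : 0 < σ) (hδ : 0 < δ)
    {w : ι → F} (hw : ∀ i, ‖w i‖ ≤ σ) (hwW : ∀ i, infDist (w i) (W : Set F) ≤ δ) :
    |b.toBasis.det w| ≤ √2 ^ Fintype.card ι * (σ ^ m * δ ^ (Fintype.card ι - m)) := by
  have : FiniteDimensional ℝ F := b.toBasis.finiteDimensional_of_finite
  have hdim := W.finrank_add_finrank_orthogonal
  rw [finrank_eq_card_basis b.toBasis] at hdim
  -- Distances to `W` are also at most `σ`; using `min σ δ` makes missing dimensions harmless.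
  have hwW' (i : ι) : infDist (w i) (W : Set F) ≤ min σ δ :=
    le_min ((infDist_submodule_le_norm W _).trans (hw i)) (hwW i)
  have hmin : 0 < min σ δ := lt_min hσ hδ
  refine (abs_det_le_of_norm_le_of_infDist_le b W hσ hmin hw hwW').trans ?_
  refine mul_le_mul_of_nonneg_left ?_ (by positivity)
  calc σ ^ finrank ℝ W * min σ δ ^ finrank ℝ Wᗮ
      = σ ^ finrank ℝ W *
          (min σ δ ^ (m - finrank ℝ W) * min σ δ ^ (Fintype.card ι - m)) := by
        rw [← pow_add]; congr 2; omega
    _ ≤ σ ^ finrank ℝ W * (σ ^ (m - finrank ℝ W) * δ ^ (Fintype.card ι - m)) := by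
        gcongr
        · exact min_le_left _ _
        · exact min_le_right _ _
    _ = σ ^ m * δ ^ (Fintype.card ι - m) := by
        rw [← mul_assoc, ← pow_add, Nat.add_sub_cancel' hW]

end Determinant

section InnerCoordinates

variable {𝕜 ι V : Type*} [RCLike 𝕜] [NormedAddCommGroup V] [InnerProductSpace 𝕜 V]

variable (𝕜) in
/-- The map `x ↦ (⟪e i, x⟫)ᵢ` of coordinates with respect to a family `e`, with values in Euclidean
space so that it is norm-nonincreasing when `e` is orthonormal. -/
noncomputable def innerCoord (e : ι → V) : V →ₗ[𝕜] EuclideanSpace 𝕜 ι :=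
  (WithLp.linearEquiv 2 𝕜 (ι → 𝕜)).symm.toLinearMap ∘ₗ LinearMap.pi fun i ↦ innerₛₗ 𝕜 (e i)

@[simp]
theorem innerCoord_apply (e : ι → V) (x : V) (i : ι) : innerCoord 𝕜 e x i = inner 𝕜 (e i) x := rfl

theorem norm_innerCoord_le [Fintype ι] {e : ι → V} (he : Orthonormal 𝕜 e) (x : V) :
    ‖innerCoord 𝕜 e x‖ ≤ ‖x‖ := by
  rw [← sq_le_sq₀ (norm_nonneg _) (norm_nonneg _), EuclideanSpace.norm_sq_eq]
  simpa only [innerCoord_apply] using he.sum_inner_products_le x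

end InnerCoordinates

theorem abs_det_inner_le {ι V : Type*} [Fintype ι] [DecidableEq ι] [NormedAddCommGroup V]
    [InnerProductSpace ℝ V] {e : ι → V} (he : Orthonormal ℝ e) {U : Submodule ℝ V}
    (heU : ∀ i, ∀ x ∈ U, inner ℝ (e i) x = 0) (E : Submodule ℝ V) [FiniteDimensional ℝ E] {m : ℕ}
    (hE : finrank ℝ E ≤ m) (hm : m ≤ Fintype.card ι) {σ δ : ℝ} (hσ : 0 < σ) (hδ : 0 < δ)
    {v : ι → V} (hvU : ∀ j, infDist (v j) (U : Set V) ≤ σ)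
    (hvE : ∀ j, infDist (v j) (E : Set V) ≤ δ) :
    |(Matrix.of fun i j ↦ inner ℝ (e i) (v j)).det| ≤
      √2 ^ Fintype.card ι * (σ ^ m * δ ^ (Fintype.card ι - m)) := by
  let L := innerCoord ℝ e
  have hLU : U.map L = ⊥ :=
    LinearMap.le_ker_iff_map.1 fun x hx ↦ by ext i; simp [L, heU i x hx]
  have hnorm (j : ι) : ‖L (v j)‖ ≤ σ := by
    have hbot := (infDist_map_le (norm_innerCoord_le he) U (v j)).trans (hvU j)
    rwa [hLU, bot_coe, infDist_singleton, dist_zero_right] at hbot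
  have hdist (j : ι) : infDist (L (v j)) (E.map L : Set (EuclideanSpace ℝ ι)) ≤ δ :=
    (infDist_map_le (norm_innerCoord_le he) E (v j)).trans (hvE j)
  exact abs_det_le_of_finrank_le (EuclideanSpace.basisFun ι ℝ) (E.map L)
    ((finrank_map_le L E).trans hE) hm hσ hδ hnorm hdist

theorem span_image_Iio_mono {R ι V : Type*} [Semiring R] [AddCommMonoid V] [Module R V] [Preorder ι]
    (u : ι → V) : Monotone fun n ↦ span R (u '' Set.Iio n) :=
  fun _ _ h ↦ span_mono (Set.image_mono (Set.Iio_subset_Iio h))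

section GramSchmidt

variable {𝕜 ι V : Type*} [RCLike 𝕜] [NormedAddCommGroup V] [InnerProductSpace 𝕜 V]
  [LinearOrder ι] [LocallyFiniteOrderBot ι] [WellFoundedLT ι]

theorem inner_gramSchmidt_eq_zero_of_mem_span {u : ι → V} {n : ι} {x : V}
    (hx : x ∈ span 𝕜 (u '' Set.Iio n)) : inner 𝕜 (gramSchmidt 𝕜 u n) x = 0 := by
  induction hx using span_induction with
  | mem x hx => obtain ⟨i, hi, rfl⟩ := hx; exact gramSchmidt_inv_triangular 𝕜 u hi
  | zero => exact inner_zero_right _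
  | add x y _ _ hx hy => rw [inner_add_right, hx, hy, add_zero]
  | smul c x _ hx => rw [inner_smul_right, hx, mul_zero]

variable (𝕜) in
theorem sub_gramSchmidt_mem_span (u : ι → V) (n : ι) :
    u n - gramSchmidt 𝕜 u n ∈ span 𝕜 (u '' Set.Iio n) := by
  rw [gramSchmidt_def, sub_sub_cancel, ← span_gramSchmidt_Iio 𝕜 u n]
  refine Submodule.sum_mem _ fun i hi ↦ ?_
  have hle : span 𝕜 {gramSchmidt 𝕜 u i} ≤ span 𝕜 (gramSchmidt 𝕜 u '' Set.Iio n) :=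
    span_mono (Set.singleton_subset_iff.2 (Set.mem_image_of_mem _ (mem_Iio.1 hi)))
  exact hle (starProjection_apply_mem _ _)

variable (𝕜) in
theorem infDist_span_image_Iio (u : ι → V) (n : ι) :
    infDist (u n) (span 𝕜 (u '' Set.Iio n) : Set V) = ‖gramSchmidt 𝕜 u n‖ := by
  rw [infDist_submodule_eq_norm_sub _ (sub_gramSchmidt_mem_span 𝕜 u n), sub_sub_cancel]
  intro y hy
  rw [sub_sub_cancel, inner_gramSchmidt_eq_zero_of_mem_span hy]

variable (𝕜) in
theorem inner_gramSchmidtNormed_self (u : ι → V) (n : ι) :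
    inner 𝕜 (gramSchmidtNormed 𝕜 u n) (u n) = (‖gramSchmidt 𝕜 u n‖ : 𝕜) := by
  have hself : inner 𝕜 (gramSchmidt 𝕜 u n) (u n) = (‖gramSchmidt 𝕜 u n‖ : 𝕜) ^ 2 := by
    have horth := inner_gramSchmidt_eq_zero_of_mem_span (sub_gramSchmidt_mem_span 𝕜 u n)
    rwa [inner_sub_right, inner_self_eq_norm_sq_to_K, sub_eq_zero] at horth
  rw [gramSchmidtNormed, inner_smul_left, hself]
  rcases eq_or_ne (‖gramSchmidt 𝕜 u n‖ : 𝕜) 0 with h | h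
  · simp only [h, inv_zero, map_zero, zero_mul]
  · rw [map_inv₀, RCLike.conj_ofReal, sq, inv_mul_cancel_left₀ h]

theorem inner_gramSchmidtNormed_eq_zero_of_mem_span {u : ι → V} {n : ι} {x : V}
    (hx : x ∈ span 𝕜 (u '' Set.Iio n)) : inner 𝕜 (gramSchmidtNormed 𝕜 u n) x = 0 := by
  rw [gramSchmidtNormed, inner_smul_left, inner_gramSchmidt_eq_zero_of_mem_span hx, mul_zero]

end GramSchmidt

section TriangularDeterminant

variable {V : Type*} [NormedAddCommGroup V] [InnerProductSpace ℝ V]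

theorem det_inner_gramSchmidtNormed (u : ℕ → V) (N n : ℕ) :
    (Matrix.of fun i j : Fin n ↦ inner ℝ (gramSchmidtNormed ℝ u (N + i)) (u (N + j))).det =
      ∏ i : Fin n, infDist (u (N + i)) (span ℝ (u '' Set.Iio (N + i)) : Set V) := by
  rw [Matrix.det_of_isUpperTriangular]
  · simp only [Matrix.of_apply, inner_gramSchmidtNormed_self, infDist_span_image_Iio,
      RCLike.ofReal_real_eq_id, id_eq]
  · intro i j hji
    have hlt : N + (j : ℕ) < N + i := Nat.add_lt_add_left hji N
    exact inner_gramSchmidtNormed_eq_zero_of_mem_span (subset_span (Set.mem_image_of_mem u hlt))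

theorem prod_infDist_span_le (u : ℕ → V) (N : ℕ) {n m : ℕ} (hmn : m ≤ n) (E : Submodule ℝ V)
    [FiniteDimensional ℝ E] (hE : finrank ℝ E ≤ m) {σ δ : ℝ} (hσ : 0 < σ) (hδ : 0 < δ)
    (huN : ∀ j, infDist (u j) (span ℝ (u '' Set.Iio N) : Set V) ≤ σ)
    (huE : ∀ j, infDist (u j) (E : Set V) ≤ δ) :
    ∏ i : Fin n, infDist (u (N + i)) (span ℝ (u '' Set.Iio (N + i)) : Set V) ≤
      √2 ^ n * (σ ^ m * δ ^ (n - m)) := by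
  by_cases hzero : ∃ i : Fin n, gramSchmidtNormed ℝ u (N + i) = 0
  · obtain ⟨i, hi⟩ := hzero
    rw [prod_eq_zero (mem_univ i)]
    · positivity
    · simpa [infDist_span_image_Iio, gramSchmidtNormed] using hi
  push Not at hzero
  have horth : Orthonormal ℝ fun i : Fin n ↦ gramSchmidtNormed ℝ u (N + i) :=
    (gramSchmidtNormed_orthonormal' u).comp (fun i : Fin n ↦ ⟨N + i, hzero i⟩) fun i j hij ↦ by
      simpa [Fin.ext_iff] using hij
  have horthN (i : Fin n) (x : V) (hx : x ∈ span ℝ (u '' Set.Iio N)) :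
      inner ℝ (gramSchmidtNormed ℝ u (N + i)) x = 0 :=
    inner_gramSchmidtNormed_eq_zero_of_mem_span
      (span_image_Iio_mono u (Nat.le_add_right N i) hx)
  have hdet := abs_det_inner_le horth horthN E hE (by simpa using hmn) hσ hδ
    (fun j : Fin n ↦ huN (N + j)) (fun j ↦ huE (N + j))
  rw [det_inner_gramSchmidtNormed, Fintype.card_fin] at hdet
  exact (le_abs_self _).trans hdet

end TriangularDeterminant

section Deviation

variable {V : Type*} [SeminormedAddCommGroup V] [Module ℝ V] {K : Set V}

/-- The deviation `sup_{x ∈ K} dist (x, E)` of a set `K` from a subspace `E`, the common ingredient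
of `kolWidth` and `greedyErr`. It has the junk value `0` when the distances are unbounded. -/
noncomputable def deviation (K : Set V) (E : Submodule ℝ V) : ℝ :=
  ⨆ x ∈ K, infDist x (E : Set V)

theorem infDist_le_deviation (hK : Bornology.IsBounded K) (E : Submodule ℝ V) {x : V}
    (hx : x ∈ K) : infDist x (E : Set V) ≤ deviation K E := by
  obtain ⟨R, hR⟩ := hK.exists_norm_le
  have hbdd : BddAbove (Set.range fun y ↦ ⨆ _ : y ∈ K, infDist y (E : Set V)) := by
    refine ⟨R, Set.forall_mem_range.2 fun y ↦ ?_⟩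
    exact Real.iSup_le (fun hy ↦ (infDist_submodule_le_norm E y).trans (hR y hy))
      ((norm_nonneg x).trans (hR x hx))
  exact (ciSup_pos hx).ge.trans (le_ciSup hbdd x)

theorem deviation_nonneg (K : Set V) (E : Submodule ℝ V) : 0 ≤ deviation K E :=
  Real.iSup_nonneg fun _ ↦ Real.iSup_nonneg fun _ ↦ infDist_nonneg

theorem deviation_anti (hK : Bornology.IsBounded K) : Antitone (deviation K) := fun E F hEF ↦
  have hle (x : V) (hx : x ∈ K) : infDist x (F : Set V) ≤ deviation K E :=
    (infDist_submodule_anti hEF x).trans (infDist_le_deviation hK E hx)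
  Real.iSup_le (fun x ↦ Real.iSup_le (hle x) (deviation_nonneg K E)) (deviation_nonneg K E)

end Deviation

section Widths

variable {V : Type*} [NormedAddCommGroup V] [InnerProductSpace ℝ V] {K : Set V}

theorem greedyErr_nonneg (u : ℕ → V) (K : Set V) (n : ℕ) : 0 ≤ greedyErr u K n :=
  deviation_nonneg K _

theorem greedyErr_anti (u : ℕ → V) (hK : Bornology.IsBounded K) : Antitone (greedyErr u K) :=
  fun _ _ h ↦ deviation_anti hK (span_image_Iio_mono u h)

theorem kolWidth_nonneg (K : Set V) (n : ℕ) : 0 ≤ kolWidth K n :=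
  Real.iInf_nonneg fun E ↦ deviation_nonneg K E.1

theorem exists_deviation_lt_of_kolWidth_lt {n : ℕ} {δ : ℝ} (h : kolWidth K n < δ) :
    ∃ E : Submodule ℝ V, Module.rank ℝ E ≤ n ∧ deviation K E < δ := by
  have : Nonempty {E : Submodule ℝ V // Module.rank ℝ E ≤ (n : Cardinal)} := ⟨⟨⊥, by simp⟩⟩
  obtain ⟨E, hE⟩ := exists_lt_of_ciInf_lt h
  exact ⟨E.1, E.2, hE⟩

theorem greedyErr_zero_le_kolWidth_zero (u : ℕ → V) (K : Set V) :
    greedyErr u K 0 ≤ kolWidth K 0 := by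
  refine le_of_forall_gt fun δ hδ ↦ ?_
  obtain ⟨E, hE, hdev⟩ := exists_deviation_lt_of_kolWidth_lt hδ
  obtain rfl : E = ⊥ := by simpa using hE
  change deviation K (span ℝ (u '' Set.Iio 0)) < δ
  simpa using hdev

end Widths

section Greedy

variable {V : Type*} [NormedAddCommGroup V] [InnerProductSpace ℝ V] {K : Set V} {u : ℕ → V}

theorem prod_infDist_span_le_greedyErr_kolWidth (hK : Bornology.IsBounded K) (hu : ∀ n, u n ∈ K)
    (N : ℕ) {n m : ℕ} (hmn : m ≤ n) :
    ∏ i : Fin n, infDist (u (N + i)) (span ℝ (u '' Set.Iio (N + i)) : Set V) ≤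
      √2 ^ n * (greedyErr u K N ^ m * kolWidth K m ^ (n - m)) := by
  have hσ := greedyErr_nonneg u K N
  have hd := kolWidth_nonneg K m
  have hbound (ε : ℝ) (hε : 0 < ε) :
      ∏ i : Fin n, infDist (u (N + i)) (span ℝ (u '' Set.Iio (N + i)) : Set V) ≤
        √2 ^ n * ((greedyErr u K N + ε) ^ m * (kolWidth K m + ε) ^ (n - m)) := by
    obtain ⟨E, hE, hdev⟩ := exists_deviation_lt_of_kolWidth_lt
      (show kolWidth K m < kolWidth K m + ε from lt_add_of_pos_right _ hε)
    have : FiniteDimensional ℝ E :=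
      rank_lt_aleph0_iff.1 (hE.trans_lt Cardinal.natCast_lt_aleph0)
    exact prod_infDist_span_le u N hmn E (finrank_le_of_rank_le hE) (by positivity) (by positivity)
      (fun j ↦ (infDist_le_deviation hK _ (hu j)).trans (le_add_of_nonneg_right hε.le))
      (fun j ↦ (infDist_le_deviation hK E (hu j)).trans hdev.le)
  have hlim : Filter.Tendsto
      (fun ε : ℝ ↦ √2 ^ n * ((greedyErr u K N + ε) ^ m * (kolWidth K m + ε) ^ (n - m)))
      (𝓝[>] 0) (𝓝 (√2 ^ n * (greedyErr u K N ^ m * kolWidth K m ^ (n - m)))) := by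
    refine (Continuous.tendsto' ?_ _ _ (by simp)).mono_left nhdsWithin_le_nhds
    fun_prop
  exact ge_of_tendsto hlim (Filter.eventually_of_mem self_mem_nhdsWithin hbound)

namespace IsWeakGreedy

variable {γ : ℝ}

theorem sq_mul_greedyErr_le_two_mul (hwg : IsWeakGreedy u K γ) (hγ : 0 ≤ γ)
    (hK : Bornology.IsBounded K) (hu : ∀ n, u n ∈ K) (N : ℕ) {m : ℕ} (hm : m ≠ 0) :
    (γ * greedyErr u K (N + 2 * m)) ^ 2 ≤ 2 * greedyErr u K N * kolWidth K m := by
  have hσ := greedyErr_nonneg u K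
  have hd := kolWidth_nonneg K m
  refine le_of_pow_le_pow_left₀ hm (by have := hσ N; positivity) ?_
  calc ((γ * greedyErr u K (N + 2 * m)) ^ 2) ^ m
      = ∏ _i : Fin (2 * m), γ * greedyErr u K (N + 2 * m) := by simp [pow_mul]
    _ ≤ ∏ i : Fin (2 * m), infDist (u (N + i)) (span ℝ (u '' Set.Iio (N + i)) : Set V) := by
        refine prod_le_prod (fun _ _ ↦ mul_nonneg hγ (hσ _)) fun i _ ↦ ?_
        exact (mul_le_mul_of_nonneg_left (greedyErr_anti u hK (by omega)) hγ).trans (hwg (N + i))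
    _ ≤ √2 ^ (2 * m) * (greedyErr u K N ^ m * kolWidth K m ^ (2 * m - m)) :=
        prod_infDist_span_le_greedyErr_kolWidth hK hu N (by omega)
    _ = (2 * greedyErr u K N * kolWidth K m) ^ m := by
        rw [pow_mul, Real.sq_sqrt zero_le_two, two_mul, Nat.add_sub_cancel, ← mul_pow, ← mul_pow,
          mul_assoc]

theorem sq_mul_greedyErr_le (hwg : IsWeakGreedy u K γ) (hγ : 0 ≤ γ)
    (hK : Bornology.IsBounded K) (hu : ∀ n, u n ∈ K) (n : ℕ) :
    γ ^ 2 * greedyErr u K n ≤ greedyErr u K n := by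
  have hmul : γ * greedyErr u K n ≤ greedyErr u K n :=
    (hwg n).trans (infDist_le_deviation hK _ (hu n))
  calc γ ^ 2 * greedyErr u K n = γ * (γ * greedyErr u K n) := by ring
    _ ≤ γ * greedyErr u K n := by gcongr
    _ ≤ greedyErr u K n := hmul

end IsWeakGreedy

end Greedy

section AlgebraicDecay

variable {τ : ℕ → ℝ} {C s : ℝ}

theorem le_two_pow_rpow_of_sq_le (hC : 0 ≤ C) (hs : 0 ≤ s) (hbase : τ 2 ≤ C)
    (hsq : ∀ m : ℕ, m ≠ 0 → τ (2 * m + 2 * m) ^ 2 ≤ 2 * τ (2 * m) * (C * (m : ℝ) ^ (-s))) (k : ℕ) :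
    τ (2 * 2 ^ k) ≤ 2 * (2 ^ s) ^ 2 * C * ((2 : ℝ) ^ k) ^ (-s) := by
  have hq : 1 ≤ (2 : ℝ) ^ s := Real.one_le_rpow one_le_two hs
  induction k with
  | zero =>
    have : 1 ≤ ((2 : ℝ) ^ s) ^ 2 := one_le_pow₀ hq
    simp only [pow_zero, mul_one, Real.one_rpow]
    nlinarith
  | succ k ih =>
    have hhalf : ((2 : ℝ) ^ k) ^ (-s) = 2 ^ s * ((2 : ℝ) ^ (k + 1)) ^ (-s) := by
      rw [pow_succ, Real.mul_rpow (by positivity) zero_le_two, mul_left_comm,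
        ← Real.rpow_add two_pos, add_neg_cancel, Real.rpow_zero, mul_one]
    have hstep := hsq (2 ^ k) (by positivity)
    push_cast at hstep
    rw [show 2 * 2 ^ k + 2 * 2 ^ k = 2 * 2 ^ (k + 1) by ring] at hstep
    refine le_of_sq_le_sq ?_ (by positivity)
    calc τ (2 * 2 ^ (k + 1)) ^ 2 ≤ 2 * τ (2 * 2 ^ k) * (C * ((2 : ℝ) ^ k) ^ (-s)) := hstep
      _ ≤ 2 * (2 * (2 ^ s) ^ 2 * C * ((2 : ℝ) ^ k) ^ (-s)) * (C * ((2 : ℝ) ^ k) ^ (-s)) := by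
        gcongr
      _ = (2 * (2 ^ s) ^ 2 * C * ((2 : ℝ) ^ (k + 1)) ^ (-s)) ^ 2 := by
        rw [hhalf]; ring

theorem exists_two_mul_two_pow_le_le_four_mul {n : ℕ} (hn : 2 ≤ n) :
    ∃ k, 2 * 2 ^ k ≤ n ∧ n ≤ 4 * 2 ^ k := by
  have hle := Nat.pow_log_le_self 2 (x := n / 2) (by omega)
  have hlt := Nat.lt_pow_succ_log_self one_lt_two (n / 2)
  rw [pow_succ] at hlt
  exact ⟨Nat.log 2 (n / 2), by omega, by omega⟩

theorem two_pow_rpow_neg_le (hs : 0 ≤ s) {n k : ℕ} (hn : 0 < n) (hnk : n ≤ 4 * 2 ^ k) :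
    ((2 : ℝ) ^ k) ^ (-s) ≤ (2 ^ s) ^ 2 * (n : ℝ) ^ (-s) := by
  have hquarter : (n : ℝ) / 4 ≤ 2 ^ k := by
    rw [div_le_iff₀' (by norm_num)]
    exact_mod_cast hnk
  calc ((2 : ℝ) ^ k) ^ (-s) ≤ ((n : ℝ) / 4) ^ (-s) :=
        Real.rpow_le_rpow_of_nonpos (by positivity) hquarter (neg_nonpos.2 hs)
    _ = (2 ^ s) ^ 2 * (n : ℝ) ^ (-s) := by
        rw [Real.div_rpow n.cast_nonneg (by norm_num), Real.rpow_neg (x := 4) (by norm_num),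
          div_inv_eq_mul, show (4 : ℝ) = 2 ^ 2 by norm_num, ← Real.rpow_pow_comm zero_le_two,
          mul_comm]

theorem le_rpow_of_antitone_of_sq_le (hτ : Antitone τ) (hC : 0 ≤ C) (hs : 0 ≤ s) (hzero : τ 0 ≤ C)
    (hsq : ∀ m : ℕ, m ≠ 0 → τ (2 * m + 2 * m) ^ 2 ≤ 2 * τ (2 * m) * (C * (m : ℝ) ^ (-s))) (n : ℕ) :
    τ n ≤ 2 ^ (4 * s + 1) * C * (max 1 (n : ℝ)) ^ (-s) := by
  have hq : 1 ≤ (2 : ℝ) ^ s := Real.one_le_rpow one_le_two hs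
  have hconst : (2 : ℝ) ^ (4 * s + 1) = 2 * (2 ^ s) ^ 4 := by
    rw [Real.rpow_add_one two_ne_zero, mul_comm 4 s, Real.rpow_mul zero_le_two, mul_comm]
    norm_cast
  rw [hconst]
  rcases lt_or_ge n 2 with hn | hn
  · have hmax : max 1 (n : ℝ) = 1 := max_eq_left (by exact_mod_cast Nat.le_of_lt_succ hn)
    have : 1 ≤ ((2 : ℝ) ^ s) ^ 4 := one_le_pow₀ hq
    rw [hmax, Real.one_rpow]
    nlinarith [hτ (Nat.zero_le n)]
  obtain ⟨k, hkn, hnk⟩ := exists_two_mul_two_pow_le_le_four_mul hn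
  have hn_max : max 1 (n : ℝ) = n := max_eq_right (by exact_mod_cast (by omega : 1 ≤ n))
  calc τ n ≤ τ (2 * 2 ^ k) := hτ hkn
    _ ≤ 2 * (2 ^ s) ^ 2 * C * ((2 : ℝ) ^ k) ^ (-s) :=
        le_two_pow_rpow_of_sq_le hC hs ((hτ (Nat.zero_le 2)).trans hzero) hsq k
    _ ≤ 2 * (2 ^ s) ^ 2 * C * ((2 ^ s) ^ 2 * (n : ℝ) ^ (-s)) := by
        gcongr
        exact two_pow_rpow_neg_le hs (by omega) hnk
    _ = 2 * (2 ^ s) ^ 4 * C * max 1 (n : ℝ) ^ (-s) := by rw [hn_max]; ring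

end AlgebraicDecay

theorem statement0_general {V : Type*} [NormedAddCommGroup V] [InnerProductSpace ℝ V]
    {K : Set V} (hK : Bornology.IsBounded K) {u : ℕ → V} (hu : ∀ n, u n ∈ K)
    {γ : ℝ} (hγ : 0 < γ) (hwg : IsWeakGreedy u K γ) {C0 s : ℝ} (hs : 0 ≤ s)
    (hd : ∀ n : ℕ, kolWidth K n ≤ C0 * (max 1 (n : ℝ)) ^ (-s)) (n : ℕ) :
    greedyErr u K n ≤
      (2 : ℝ) ^ (4 * s + 1) * C0 * γ ^ (-(2 : ℝ)) * (max 1 (n : ℝ)) ^ (-s) := by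
  have hd0 : kolWidth K 0 ≤ C0 := by simpa using hd 0
  have hτ : Antitone fun n ↦ γ ^ 2 * greedyErr u K n := fun _ _ h ↦
    mul_le_mul_of_nonneg_left (greedyErr_anti u hK h) (by positivity)
  have hzero : γ ^ 2 * greedyErr u K 0 ≤ C0 :=
    (hwg.sq_mul_greedyErr_le hγ.le hK hu 0).trans ((greedyErr_zero_le_kolWidth_zero u K).trans hd0)
  have hsq (m : ℕ) (hm : m ≠ 0) : (γ ^ 2 * greedyErr u K (2 * m + 2 * m)) ^ 2 ≤
      2 * (γ ^ 2 * greedyErr u K (2 * m)) * (C0 * (m : ℝ) ^ (-s)) := by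
    have hdm : kolWidth K m ≤ C0 * (m : ℝ) ^ (-s) := by
      simpa [Nat.one_le_iff_ne_zero.2 hm] using hd m
    have hσ := greedyErr_nonneg u K (2 * m)
    calc (γ ^ 2 * greedyErr u K (2 * m + 2 * m)) ^ 2
        = γ ^ 2 * (γ * greedyErr u K (2 * m + 2 * m)) ^ 2 := by ring
      _ ≤ γ ^ 2 * (2 * greedyErr u K (2 * m) * (C0 * (m : ℝ) ^ (-s))) := by
        gcongr
        exact (hwg.sq_mul_greedyErr_le_two_mul hγ.le hK hu (2 * m) hm).trans (by gcongr)
      _ = 2 * (γ ^ 2 * greedyErr u K (2 * m)) * (C0 * (m : ℝ) ^ (-s)) := by ring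
  have hdecay := le_rpow_of_antitone_of_sq_le hτ ((kolWidth_nonneg K 0).trans hd0) hs hzero hsq n
  rw [Real.rpow_neg hγ.le, Real.rpow_two, mul_right_comm, ← div_eq_mul_inv,
    le_div_iff₀' (by positivity)]
  exact hdecay

theorem statement0 {V : Type*} [NormedAddCommGroup V] [InnerProductSpace ℝ V] [CompleteSpace V]
    (K : Set V) (hK : IsCompact K) (u : ℕ → V) (hu : ∀ n, u n ∈ K)
    (γ : ℝ) (hγ : γ ∈ Set.Ioc (0 : ℝ) 1) (hwg : IsWeakGreedy u K γ)
    (C0 s : ℝ) (hC0 : 0 < C0) (hs : 0 < s)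
    (hd : ∀ n : ℕ, kolWidth K n ≤ C0 * (max 1 (n : ℝ)) ^ (-s)) :
    ∀ n : ℕ, greedyErr u K n ≤
      (2 : ℝ) ^ (4 * s + 1) * C0 * γ ^ (-(2 : ℝ)) * (max 1 (n : ℝ)) ^ (-s) :=
  statement0_general hK.isBounded hu hγ.1 hwg hs.le hd
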